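/- There exists a constant C > 0, depending only on Ω, ω₀, ω and η⁰, such that for every T > 0, every bounded measurable potential a, and every classical nonnegative solution q of the adjoint heat equation with Neumann boundary condition, one has ∫_{T/4}^{3T/4} ∫_Ω q(t,x) dx dt ≤ exp(C(1 + 1/T + ‖a‖_∞^{1/2})) ∫₀^T ∫_ω q(t,x) dx dt. -/

import Mathlib

open MeasureTheory Real Set RealInnerProductSpace

noncomputable def spaceLaplacian {N : ℕ} (f : EuclideanSpace ℝ (Fin N) → ℝ)
    (x : EuclideanSpace ℝ (Fin N)) : ℝ :=
  ∑ i : Fin N, fderiv ℝ (fun y => fderiv ℝ f y (EuclideanSpace.single i 1)) x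
    (EuclideanSpace.single i 1)

/-!
The proof is by duality with a positive test function. Let `K` exceed `η` by at least one and set
`w = exp ((s / t) (η - K)) - exp (-s K / t)`, which is positive in `Ω`, zero on `∂Ω` and vanishes to
infinite order as `t → 0⁺`. The normal derivative of `w` points into `Ω`, so Green's formula gives
`∫ q Δw ≤ ∫ w Δq` for nonnegative `q`. Integrals over `∂Ω` are avoided by replacing `w` with a
convex truncation `ρ ∘ w` that vanishes near `∂Ω`: convexity yields `Δ(ρ ∘ w) ≥ (ρ' ∘ w) Δw`, and
`ρ' ∘ w` tends to one in `Ω`.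

The equation for `q` thus bounds the integral of `q (Δw - ∂ₜw - ‖a‖ w)` by the initial term
`∫ q w` at `t = t₁`, which tends to zero with `t₁`. The leading term of `Δw` is
`(s / t)² |∇η|² exp ((s / t) (η - K))`, and `|∇η|` is bounded below outside `ω`. It absorbs all the
others as soon as `s / T` is a large multiple of `1 + 1 / T + √‖a‖`, and it is this choice of `s`
that produces the exponent of the observability constant.
-/

open Filter Topology

section Preliminaries

theorem tendsto_exp_neg_div_nhdsGT_zero {s : ℝ} (hs : 0 < s) :
    Tendsto (fun t => exp (-(s / t))) (𝓝[>] 0) (𝓝 0) :=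
  tendsto_exp_neg_atTop_nhds_zero.comp (tendsto_inv_nhdsGT_zero.const_mul_atTop hs)

theorem four_le_exp_two_mul {x : ℝ} (hx : 1 ≤ x) : 4 ≤ exp (2 * x) := by
  have h : 2 ≤ exp x := by linarith [add_one_le_exp x]
  calc (4 : ℝ) = 2 * 2 := by norm_num
    _ ≤ exp x * exp x := by gcongr
    _ = exp (2 * x) := by rw [← exp_add, two_mul]

theorem integrableOn_of_continuousOn_closure {X F : Type*} [PseudoMetricSpace X] [ProperSpace X]
    [T2Space X] [MeasurableSpace X] [OpensMeasurableSpace X] [NormedAddCommGroup F] {μ : Measure X}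
    [IsFiniteMeasureOnCompacts μ] {S : Set X} (hS : Bornology.IsBounded S) {f : X → F}
    (hf : ContinuousOn f (closure S)) : IntegrableOn f S μ :=
  (hf.integrableOn_compact hS.isCompact_closure).mono_set subset_closure

theorem setIntegral_le_setIntegral_of_subset {α : Type*} [MeasurableSpace α] {μ : Measure α}
    {S U : Set α} (hS : MeasurableSet S) (hU : MeasurableSet U) (hSU : S ⊆ U) {f g : α → ℝ}
    (hf : IntegrableOn f S μ) (hg : IntegrableOn g U μ) (hfg : ∀ a ∈ S, f a ≤ g a)
    (hg₀ : ∀ a ∈ U, 0 ≤ g a) : ∫ a in S, f a ∂μ ≤ ∫ a in U, g a ∂μ :=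
  (setIntegral_mono_on hf (hg.mono_set hSU) hS hfg).trans
    (setIntegral_mono_set hg (ae_restrict_of_forall_mem hU hg₀) hSU.eventuallyLE)

-- Off `S` the factor `g - c / 2` is at least `c / 2`; on `S` it is only at least `-c / 2`.
theorem half_mul_sub_indicator_le {α : Type*} {S : Set α} {f : α → ℝ} {c g : ℝ} {a : α}
    (hf : 0 ≤ f a) (hg : 0 ≤ g) (hgc : a ∉ S → c ≤ g) :
    c / 2 * f a - c * S.indicator f a ≤ f a * (g - c / 2) := by
  by_cases ha : a ∈ S
  · rw [indicator_of_mem ha]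
    linear_combination mul_nonneg hf hg
  · rw [indicator_of_notMem ha]
    linear_combination mul_le_mul_of_nonneg_left (hgc ha) hf

theorem mul_setIntegral_sub_le_of_indicator_le {α : Type*} [MeasurableSpace α] {μ : Measure α}
    {S U : Set α} (hS : MeasurableSet S) (hU : MeasurableSet U) (hSU : S ⊆ U) {f g : α → ℝ}
    (hf : IntegrableOn f U μ) (hg : IntegrableOn g U μ) {b c : ℝ}
    (hfg : ∀ a ∈ U, b * f a - c * S.indicator f a ≤ g a) :
    b * (∫ a in U, f a ∂μ) - c * ∫ a in S, f a ∂μ ≤ ∫ a in U, g a ∂μ := by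
  have hbf : IntegrableOn (fun a => b * f a) U μ := hf.const_mul b
  have hcf : IntegrableOn (fun a => c * S.indicator f a) U μ := (hf.indicator hS).const_mul c
  refine le_of_eq_of_le ?_ (setIntegral_mono_on (Integrable.sub hbf hcf) hg hU hfg)
  rw [integral_sub' hbf hcf, integral_const_mul, integral_const_mul, setIntegral_indicator hS,
    inter_eq_self_of_subset_right hSU]

theorem setIntegral_Ioc_prod_eq_setIntegral_sub {X F : Type*} [MeasurableSpace X]
    [NormedAddCommGroup F] [NormedSpace ℝ F] [CompleteSpace F] {μ : Measure X} [SFinite μ]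
    {S : Set X} (hS : MeasurableSet S) {t₁ t₂ : ℝ} (ht : t₁ ≤ t₂) {f f' : ℝ × X → F}
    (hf : ∀ p ∈ Icc t₁ t₂ ×ˢ S, HasDerivAt (fun τ => f (τ, p.2)) (f' p) p.1)
    (hf' : IntegrableOn f' (Ioc t₁ t₂ ×ˢ S) (volume.prod μ)) :
    ∫ p in Ioc t₁ t₂ ×ˢ S, f' p ∂volume.prod μ = ∫ x in S, (f (t₂, x) - f (t₁, x)) ∂μ := by
  have hf'prod : Integrable f' ((volume.restrict (Ioc t₁ t₂)).prod (μ.restrict S)) := by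
    rwa [Measure.prod_restrict]
  rw [← Measure.prod_restrict, integral_prod_symm _ hf'prod]
  refine integral_congr_ae ?_
  filter_upwards [hf'prod.prod_left_ae, ae_restrict_mem hS] with x hint hx
  rw [← intervalIntegral.integral_of_le ht]
  exact intervalIntegral.integral_eq_sub_of_hasDerivAt (f := fun t => f (t, x))
    (fun t htt => hf (t, x) ⟨uIcc_of_le ht ▸ htt, hx⟩)
    ((intervalIntegrable_iff_integrableOn_Ioc_of_le ht).2 hint)

end Preliminaries

section IntegrationByParts

variable {E F : Type*} [NormedAddCommGroup E] [NormedSpace ℝ E]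
  [NormedAddCommGroup F] [NormedSpace ℝ F]

/-- Classical `C²` regularity up to the boundary: `u` is twice differentiable at every point of
`K`, and its second derivative is continuous on `K`. The derivatives are those of `u` as a function
on the whole space, so `u` has to be defined in a neighbourhood of `K`. -/
structure TwiceContDiffOn (u : E → F) (K : Set E) : Prop where
  differentiableAt : ∀ x ∈ K, DifferentiableAt ℝ u x
  differentiableAt_fderiv : ∀ x ∈ K, DifferentiableAt ℝ (fderiv ℝ u) x
  continuousOn_fderiv_fderiv : ContinuousOn (fderiv ℝ (fderiv ℝ u)) K

namespace TwiceContDiffOn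

variable {u : E → F} {K : Set E}

theorem of_contDiff (hu : ContDiff ℝ 2 u) : TwiceContDiffOn u K where
  differentiableAt x _ := hu.differentiable two_ne_zero x
  differentiableAt_fderiv x _ :=
    (hu.fderiv_right (m := 1) le_rfl).differentiable one_ne_zero x
  continuousOn_fderiv_fderiv :=
    ((hu.fderiv_right (m := 1) le_rfl).continuous_fderiv one_ne_zero).continuousOn

theorem continuousOn (hu : TwiceContDiffOn u K) : ContinuousOn u K :=
  fun x hx => (hu.differentiableAt x hx).continuousAt.continuousWithinAt

theorem continuousOn_fderiv_apply (hu : TwiceContDiffOn u K) (v : E) :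
    ContinuousOn (fun x => fderiv ℝ u x v) K := fun x hx =>
  (hu.differentiableAt_fderiv x hx).continuousAt.continuousWithinAt.clm_apply
    continuousWithinAt_const

theorem continuousOn_fderiv_fderiv_apply (hu : TwiceContDiffOn u K) (v w : E) :
    ContinuousOn (fun x => fderiv ℝ (fderiv ℝ u) x v w) K :=
  (hu.continuousOn_fderiv_fderiv.clm_apply continuousOn_const).clm_apply continuousOn_const

theorem hasFDerivAt_fderiv_apply (hu : TwiceContDiffOn u K) {x : E} (hx : x ∈ K) (v : E) :
    HasFDerivAt (fun y => fderiv ℝ u y v) ((fderiv ℝ (fderiv ℝ u) x).flip v) x := by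
  simpa using (hu.differentiableAt_fderiv x hx).hasFDerivAt.clm_apply (hasFDerivAt_const v x)

end TwiceContDiffOn

theorem hasFDerivAt_indicator_of_eventuallyEq_zero {Ω : Set E} (hΩ : IsOpen Ω) {V : E → F}
    {V' : E → E →L[ℝ] F} (hV : ∀ x ∈ Ω, HasFDerivAt V (V' x) x)
    (hV₀ : ∀ x ∈ frontier Ω, V =ᶠ[𝓝 x] 0) (x : E) :
    HasFDerivAt (Ω.indicator V) (Ω.indicator V' x) x := by
  by_cases hx : x ∈ Ω
  · rw [indicator_of_mem hx]
    exact (hV x hx).congr_of_eventuallyEq (eqOn_indicator.eventuallyEq_of_mem (hΩ.mem_nhds hx))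
  rw [indicator_of_notMem hx]
  refine (hasFDerivAt_const (0 : F) x).congr_of_eventuallyEq ?_
  by_cases hx' : x ∈ closure Ω
  · filter_upwards [hV₀ x (hΩ.frontier_eq ▸ ⟨hx', hx⟩)] with y hy
    exact indicator_apply_eq_zero.2 fun _ => hy
  · filter_upwards [isClosed_closure.isOpen_compl.mem_nhds hx'] with y hy
    exact indicator_of_notMem (fun h => hy (subset_closure h)) V

variable [FiniteDimensional ℝ E] [MeasurableSpace E] [BorelSpace E] {μ : Measure E}
  [μ.IsAddHaarMeasure]

theorem setIntegral_hasFDerivAt_apply_eq_zero {Ω : Set E} (hΩ : IsOpen Ω) {V : E → F}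
    {V' : E → E →L[ℝ] F} {v : E} (hV : ∀ x ∈ Ω, HasFDerivAt V (V' x) x)
    (hV₀ : ∀ x ∈ frontier Ω, V =ᶠ[𝓝 x] 0) (hVint : IntegrableOn V Ω μ)
    (hV'int : IntegrableOn (fun x => V' x v) Ω μ) :
    ∫ x in Ω, V' x v ∂μ = 0 := by
  have hderiv := hasFDerivAt_indicator_of_eventuallyEq_zero hΩ hV hV₀
  have hfderiv : (fun x => fderiv ℝ (Ω.indicator V) x v) = Ω.indicator fun x => V' x v := by
    ext x
    rw [(hderiv x).fderiv]
    by_cases hx : x ∈ Ω <;> simp [hx]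
  have hparts := integral_smul_fderiv_eq_neg_fderiv_smul_of_integrable (μ := μ) (𝕜 := ℝ)
    (f := fun _ => 1) (g := Ω.indicator V) (v := v) (by simp)
    (by simpa only [hfderiv, one_smul, integrable_indicator_iff hΩ.measurableSet] using hV'int)
    (by simpa only [one_smul, integrable_indicator_iff hΩ.measurableSet] using hVint)
    (fun x _ => by fun_prop) (fun x _ => (hderiv x).differentiableAt)
  simpa [hfderiv, integral_indicator hΩ.measurableSet] using hparts

theorem setIntegral_mul_fderiv_fderiv_comm {Ω : Set E} (hΩ : IsOpen Ω)
    (hΩb : Bornology.IsBounded Ω) {φ u : E → ℝ} (hφ : TwiceContDiffOn φ (closure Ω))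
    (hu : TwiceContDiffOn u (closure Ω)) (hφ₀ : ∀ x ∈ frontier Ω, φ =ᶠ[𝓝 x] 0) (v : E) :
    ∫ x in Ω, φ x * fderiv ℝ (fderiv ℝ u) x v v ∂μ =
      ∫ x in Ω, u x * fderiv ℝ (fderiv ℝ φ) x v v ∂μ := by
  have : ProperSpace E := FiniteDimensional.proper ℝ E
  let V' (x : E) : E →L[ℝ] ℝ :=
    (φ x • (fderiv ℝ (fderiv ℝ u) x).flip v + fderiv ℝ u x v • fderiv ℝ φ x) -
      (u x • (fderiv ℝ (fderiv ℝ φ) x).flip v + fderiv ℝ φ x v • fderiv ℝ u x)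
  have hV : ∀ x ∈ Ω, HasFDerivAt (fun y => φ y * fderiv ℝ u y v - u y * fderiv ℝ φ y v) (V' x) x :=
    fun x hx => have hx' := subset_closure hx
      ((hφ.differentiableAt x hx').hasFDerivAt.mul (hu.hasFDerivAt_fderiv_apply hx' v)).sub
        ((hu.differentiableAt x hx').hasFDerivAt.mul (hφ.hasFDerivAt_fderiv_apply hx' v))
  have hV'v : (fun x => V' x v) = fun x =>
      φ x * fderiv ℝ (fderiv ℝ u) x v v - u x * fderiv ℝ (fderiv ℝ φ) x v v := by
    ext x
    simp only [V', sub_apply, add_apply, smul_apply, ContinuousLinearMap.flip_apply, smul_eq_mul]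
    ring
  have hV₀ : ∀ x ∈ frontier Ω,
      (fun y => φ y * fderiv ℝ u y v - u y * fderiv ℝ φ y v) =ᶠ[𝓝 x] 0 := fun x hx => by
    filter_upwards [hφ₀ x hx, (hφ₀ x hx).fderiv (𝕜 := ℝ)] with y hy hy'
    simp [hy, hy']
  have hφu : IntegrableOn (fun x => φ x * fderiv ℝ (fderiv ℝ u) x v v) Ω μ :=
    integrableOn_of_continuousOn_closure hΩb
      (hφ.continuousOn.mul (hu.continuousOn_fderiv_fderiv_apply v v))
  have huφ : IntegrableOn (fun x => u x * fderiv ℝ (fderiv ℝ φ) x v v) Ω μ :=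
    integrableOn_of_continuousOn_closure hΩb
      (hu.continuousOn.mul (hφ.continuousOn_fderiv_fderiv_apply v v))
  have hzero : ∫ x in Ω, V' x v ∂μ = 0 :=
    setIntegral_hasFDerivAt_apply_eq_zero hΩ hV hV₀
      (integrableOn_of_continuousOn_closure hΩb ((hφ.continuousOn.mul
        (hu.continuousOn_fderiv_apply v)).sub
          (hu.continuousOn.mul (hφ.continuousOn_fderiv_apply v))))
      (hV'v ▸ hφu.sub huφ)
  rw [hV'v, integral_sub hφu huφ] at hzero
  exact sub_eq_zero.1 hzero

end IntegrationByParts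

section SpaceLaplacian

variable {N : ℕ} {u w : EuclideanSpace ℝ (Fin N) → ℝ} {x : EuclideanSpace ℝ (Fin N)}

theorem spaceLaplacian_eq_sum_fderiv_fderiv (hu : DifferentiableAt ℝ (fderiv ℝ u) x) :
    spaceLaplacian u x = ∑ i, fderiv ℝ (fderiv ℝ u) x (EuclideanSpace.single i 1)
      (EuclideanSpace.single i 1) := by
  refine Finset.sum_congr rfl fun i _ => ?_
  rw [(hu.hasFDerivAt.clm_apply (hasFDerivAt_const (EuclideanSpace.single i 1) x)).fderiv]
  simp

theorem TwiceContDiffOn.continuousOn_spaceLaplacian {K : Set (EuclideanSpace ℝ (Fin N))}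
    (hu : TwiceContDiffOn u K) : ContinuousOn (spaceLaplacian u) K :=
  (continuousOn_finsetSum _ fun _ _ => hu.continuousOn_fderiv_fderiv_apply _ _).congr
    fun _ hx => spaceLaplacian_eq_sum_fderiv_fderiv (hu.differentiableAt_fderiv _ hx)

theorem sum_fderiv_single_sq (u : EuclideanSpace ℝ (Fin N) → ℝ) (x : EuclideanSpace ℝ (Fin N)) :
    ∑ i, fderiv ℝ u x (EuclideanSpace.single i 1) ^ 2 = ‖gradient u x‖ ^ 2 := by
  rw [EuclideanSpace.norm_sq_eq]
  refine Finset.sum_congr rfl fun i _ => ?_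
  rw [← inner_gradient_left, EuclideanSpace.inner_single_right]
  simp

theorem continuous_gradient {E : Type*} [NormedAddCommGroup E] [InnerProductSpace ℝ E]
    [CompleteSpace E] {f : E → ℝ} (hf : ContDiff ℝ 1 f) : Continuous (gradient f) :=
  (InnerProductSpace.toDual ℝ E).symm.continuous.comp (hf.continuous_fderiv one_ne_zero)

theorem spaceLaplacian_comp {f f' : ℝ → ℝ} {f'' : ℝ} (hf : ∀ r, HasDerivAt f (f' r) r)
    (hf' : HasDerivAt f' f'' (u x)) (hu : ContDiff ℝ 2 u) :
    spaceLaplacian (fun y => f (u y)) x =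
      f'' * ‖gradient u x‖ ^ 2 + f' (u x) * spaceLaplacian u x := by
  have hud (y) : HasFDerivAt u (fderiv ℝ u y) y := (hu.differentiable two_ne_zero y).hasFDerivAt
  have hfu (y) : fderiv ℝ (fun y => f (u y)) y = f' (u y) • fderiv ℝ u y :=
    ((hf (u y)).comp_hasFDerivAt y (hud y)).fderiv
  have hu' := TwiceContDiffOn.of_contDiff (K := univ) hu
  rw [← sum_fderiv_single_sq, Finset.mul_sum,
    spaceLaplacian_eq_sum_fderiv_fderiv (hu'.differentiableAt_fderiv x (mem_univ x)),
    Finset.mul_sum, ← Finset.sum_add_distrib]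
  refine Finset.sum_congr rfl fun i _ => ?_
  simp only [hfu, FunLike.coe_smul, Pi.smul_apply, smul_eq_mul]
  have hf'u : HasFDerivAt (fun y => f' (u y)) (f'' • fderiv ℝ u x) x :=
    hf'.comp_hasFDerivAt x (hud x)
  rw [(hf'u.fun_mul
    (hu'.hasFDerivAt_fderiv_apply (mem_univ x) (EuclideanSpace.single i 1))).fderiv]
  simp only [add_apply, smul_apply, ContinuousLinearMap.flip_apply, smul_eq_mul]
  ring

theorem setIntegral_mul_spaceLaplacian_comm {Ω : Set (EuclideanSpace ℝ (Fin N))} (hΩ : IsOpen Ω)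
    (hΩb : Bornology.IsBounded Ω) (hw : TwiceContDiffOn w (closure Ω))
    (hu : TwiceContDiffOn u (closure Ω)) (hw₀ : ∀ x ∈ frontier Ω, w =ᶠ[𝓝 x] 0) :
    ∫ x in Ω, w x * spaceLaplacian u x = ∫ x in Ω, u x * spaceLaplacian w x := by
  have expand {f g : EuclideanSpace ℝ (Fin N) → ℝ} (hf : TwiceContDiffOn f (closure Ω))
      (hg : TwiceContDiffOn g (closure Ω)) : ∫ x in Ω, f x * spaceLaplacian g x =
      ∑ i, ∫ x in Ω, f x * fderiv ℝ (fderiv ℝ g) x (EuclideanSpace.single i 1)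
        (EuclideanSpace.single i 1) := by
    rw [← integral_finsetSum _ fun i _ => integrableOn_of_continuousOn_closure hΩb
      (hf.continuousOn.fun_mul (hg.continuousOn_fderiv_fderiv_apply _ _))]
    refine setIntegral_congr_fun hΩ.measurableSet fun x hx => ?_
    simp only [spaceLaplacian_eq_sum_fderiv_fderiv
      (hg.differentiableAt_fderiv x (subset_closure hx)), Finset.mul_sum]
  rw [expand hw hu, expand hu hw]
  exact Finset.sum_congr rfl fun i _ => setIntegral_mul_fderiv_fderiv_comm hΩ hΩb hw hu hw₀ _

end SpaceLaplacian

section SmoothRamp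

/-- A smooth convex approximation of `r ↦ max r 0`, vanishing for `n * r ≤ 1` and of slope one for
`2 ≤ n * r`. Truncating with it makes a function that vanishes on the boundary of a domain vanish
near that boundary. -/
noncomputable def smoothRamp (n r : ℝ) : ℝ :=
  ∫ s in 0..r, smoothTransition (n * s - 1)

theorem hasDerivAt_smoothRamp (n r : ℝ) :
    HasDerivAt (smoothRamp n) (smoothTransition (n * r - 1)) r :=
  (Continuous.integral_hasStrictDerivAt
    (smoothTransition.continuous.comp (by fun_prop)) 0 r).hasDerivAt

theorem hasDerivAt_smoothTransition_mul_sub_one (n r : ℝ) :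
    HasDerivAt (fun s => smoothTransition (n * s - 1)) (deriv smoothTransition (n * r - 1) * n) r :=
  ((smoothTransition.contDiff (n := 1)).differentiable one_ne_zero _).hasDerivAt.comp r
    (by simpa using ((hasDerivAt_id r).const_mul n).sub_const 1)

theorem contDiff_smoothRamp (n : ℝ) : ContDiff ℝ 2 (smoothRamp n) := by
  refine (contDiff_succ_iff_deriv (n := 1)).2
    ⟨fun r => (hasDerivAt_smoothRamp n r).differentiableAt, by simp, ?_⟩
  rw [funext fun r => (hasDerivAt_smoothRamp n r).deriv]
  exact smoothTransition.contDiff.comp (by fun_prop)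

theorem smoothRamp_eq_zero {n r : ℝ} (hn : 0 ≤ n) (hr : n * r ≤ 1) : smoothRamp n r = 0 := by
  refine (intervalIntegral.integral_congr fun s hs => ?_).trans intervalIntegral.integral_zero
  refine smoothTransition.zero_of_nonpos (sub_nonpos.2 ?_)
  calc n * s ≤ n * max 0 r := mul_le_mul_of_nonneg_left hs.2 hn
    _ = max (n * 0) (n * r) := mul_max_of_nonneg _ _ hn
    _ ≤ 1 := max_le (by simp) hr

theorem abs_smoothTransition_le_one (r : ℝ) : |smoothTransition r| ≤ 1 :=
  abs_le.2 ⟨neg_one_lt_zero.le.trans (smoothTransition.nonneg r), smoothTransition.le_one r⟩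

theorem abs_smoothRamp_le (n r : ℝ) : |smoothRamp n r| ≤ |r| := by
  simpa [smoothRamp] using intervalIntegral.norm_integral_le_of_norm_le_const
    (a := 0) (b := r) (f := fun s => smoothTransition (n * s - 1)) (C := 1)
    fun s _ => abs_smoothTransition_le_one (n * s - 1)

theorem tendsto_smoothTransition_mul_sub_one {r : ℝ} (hr : 0 < r) :
    Tendsto (fun n : ℕ => smoothTransition (n * r - 1)) atTop (𝓝 1) := by
  refine tendsto_const_nhds.congr' ?_
  filter_upwards [(tendsto_natCast_atTop_atTop.atTop_mul_const hr).eventually_ge_atTop 2] with n hn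
  exact (smoothTransition.one_of_one_le (by linarith)).symm

theorem tendsto_smoothRamp {r : ℝ} (hr : 0 < r) :
    Tendsto (fun n : ℕ => smoothRamp n r) atTop (𝓝 r) := by
  have hlim : Tendsto (fun n : ℕ => ∫ s in 0..r, smoothTransition (n * s - 1)) atTop
      (𝓝 (∫ _ in 0..r, 1)) := by
    refine intervalIntegral.tendsto_integral_filter_of_dominated_convergence (fun _ => 1)
      (.of_forall fun n => (smoothTransition.continuous.comp
        (by fun_prop : Continuous fun s : ℝ => n * s - 1)).aestronglyMeasurable)
      (.of_forall fun n => .of_forall fun s _ => abs_smoothTransition_le_one _) (by simp)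
      (.of_forall fun s hs => tendsto_smoothTransition_mul_sub_one ?_)
    exact (uIoc_of_le hr.le ▸ hs).1
  simpa [smoothRamp] using hlim

end SmoothRamp

section GreenInequality

variable {N : ℕ} {Ω : Set (EuclideanSpace ℝ (Fin N))} {u w : EuclideanSpace ℝ (Fin N) → ℝ}

theorem setIntegral_mul_smoothTransition_mul_spaceLaplacian_le (hΩ : IsOpen Ω)
    (hΩb : Bornology.IsBounded Ω) (hw : ContDiff ℝ 2 w) (hw₀ : ∀ x ∈ frontier Ω, w x = 0)
    (hu : TwiceContDiffOn u (closure Ω)) (hu_nonneg : ∀ x ∈ Ω, 0 ≤ u x) {n : ℝ} (hn : 0 ≤ n) :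
    ∫ x in Ω, u x * (smoothTransition (n * w x - 1) * spaceLaplacian w x) ≤
      ∫ x in Ω, smoothRamp n (w x) * spaceLaplacian u x := by
  have hramp : TwiceContDiffOn (fun x => smoothRamp n (w x)) (closure Ω) :=
    .of_contDiff ((contDiff_smoothRamp n).comp hw)
  have hramp₀ : ∀ x ∈ frontier Ω, (fun y => smoothRamp n (w y)) =ᶠ[𝓝 x] 0 := fun x hx => by
    have hnw : ∀ᶠ y in 𝓝 x, n * w y < 1 :=
      (continuous_const.mul hw.continuous).continuousAt.eventually_lt_const (by simp [hw₀ x hx])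
    filter_upwards [hnw] with y hy using smoothRamp_eq_zero hn hy.le
  rw [setIntegral_mul_spaceLaplacian_comm hΩ hΩb hramp hu hramp₀]
  have hcont : Continuous fun x => smoothTransition (n * w x - 1) :=
    smoothTransition.continuous.comp (by have := hw.continuous; fun_prop)
  refine setIntegral_mono_on
    (integrableOn_of_continuousOn_closure hΩb (hu.continuousOn.mul (hcont.continuousOn.mul
      (TwiceContDiffOn.of_contDiff hw).continuousOn_spaceLaplacian)))
    (integrableOn_of_continuousOn_closure hΩb
      (hu.continuousOn.mul hramp.continuousOn_spaceLaplacian))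
    hΩ.measurableSet fun x hx => mul_le_mul_of_nonneg_left ?_ (hu_nonneg x hx)
  rw [spaceLaplacian_comp (hasDerivAt_smoothRamp n) (hasDerivAt_smoothTransition_mul_sub_one n _)
    hw, le_add_iff_nonneg_left]
  have := smoothTransition.monotone.deriv_nonneg (x := n * w x - 1)
  positivity

theorem setIntegral_mul_spaceLaplacian_le (hΩ : IsOpen Ω) (hΩb : Bornology.IsBounded Ω)
    (hw : ContDiff ℝ 2 w) (hw_pos : ∀ x ∈ Ω, 0 < w x) (hw₀ : ∀ x ∈ frontier Ω, w x = 0)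
    (hu : TwiceContDiffOn u (closure Ω)) (hu_nonneg : ∀ x ∈ Ω, 0 ≤ u x) :
    ∫ x in Ω, u x * spaceLaplacian w x ≤ ∫ x in Ω, w x * spaceLaplacian u x := by
  have hw' : TwiceContDiffOn w (closure Ω) := .of_contDiff hw
  have huw : IntegrableOn (fun x => u x * spaceLaplacian w x) Ω :=
    integrableOn_of_continuousOn_closure hΩb (hu.continuousOn.mul hw'.continuousOn_spaceLaplacian)
  have hwu : IntegrableOn (fun x => w x * spaceLaplacian u x) Ω :=
    integrableOn_of_continuousOn_closure hΩb (hw'.continuousOn.mul hu.continuousOn_spaceLaplacian)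
  have hlapu := (integrableOn_of_continuousOn_closure (μ := volume) hΩb
    hu.continuousOn_spaceLaplacian).aestronglyMeasurable
  have hwc := hw.continuous
  have hlim_left : Tendsto (fun n : ℕ => ∫ x in Ω,
      smoothTransition (n * w x - 1) * (u x * spaceLaplacian w x)) atTop
      (𝓝 (∫ x in Ω, u x * spaceLaplacian w x)) := by
    refine tendsto_integral_of_dominated_convergence _
      (fun n => (smoothTransition.continuous.comp (by fun_prop)).aestronglyMeasurable.mul
        huw.aestronglyMeasurable) huw.norm (fun n => .of_forall fun x => ?_) ?_
    · rw [norm_mul]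
      exact mul_le_of_le_one_left (norm_nonneg _) (abs_smoothTransition_le_one _)
    · filter_upwards [ae_restrict_mem hΩ.measurableSet] with x hx
      simpa using (tendsto_smoothTransition_mul_sub_one (hw_pos x hx)).mul_const _
  have hlim_right : Tendsto (fun n : ℕ => ∫ x in Ω, smoothRamp n (w x) * spaceLaplacian u x)
      atTop (𝓝 (∫ x in Ω, w x * spaceLaplacian u x)) := by
    refine tendsto_integral_of_dominated_convergence _
      (fun n => ((contDiff_smoothRamp n).continuous.comp hwc).aestronglyMeasurable.mul hlapu)
      hwu.norm (fun n => .of_forall fun x => ?_) ?_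
    · rw [norm_mul, norm_mul]
      exact mul_le_mul_of_nonneg_right (abs_smoothRamp_le _ _) (norm_nonneg _)
    · filter_upwards [ae_restrict_mem hΩ.measurableSet] with x hx
      exact (tendsto_smoothRamp (hw_pos x hx)).mul_const _
  refine le_of_tendsto_of_tendsto' hlim_left hlim_right fun n => ?_
  simpa only [mul_left_comm] using
    setIntegral_mul_smoothTransition_mul_spaceLaplacian_le hΩ hΩb hw hw₀ hu hu_nonneg n.cast_nonneg

end GreenInequality

section Duality

variable {N : ℕ} {J J' : Set ℝ} {t₁ t₂ A : ℝ} {Ω : Set (EuclideanSpace ℝ (Fin N))}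
  {q qt w wt : ℝ × EuclideanSpace ℝ (Fin N) → ℝ}

/-- `q` is a nonnegative classical supersolution, `-∂ₜq - Δq + A q ≥ 0` almost everywhere in
`J × Ω`, of the backward heat equation with the constant potential `A`; `qt` is its time
derivative. -/
structure IsNonnegSupersolution (J : Set ℝ) (Ω : Set (EuclideanSpace ℝ (Fin N))) (A : ℝ)
    (q qt : ℝ × EuclideanSpace ℝ (Fin N) → ℝ) : Prop where
  continuousOn : ContinuousOn q (J ×ˢ closure Ω)
  nonneg : ∀ p ∈ J ×ˢ closure Ω, 0 ≤ q p
  hasDerivAt : ∀ p ∈ J ×ˢ closure Ω, HasDerivAt (fun τ => q (τ, p.2)) (qt p) p.1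
  continuousOn_deriv : ContinuousOn qt (J ×ˢ closure Ω)
  differentiableAt : ∀ p ∈ J ×ˢ closure Ω, DifferentiableAt ℝ (fun z => q (p.1, z)) p.2
  differentiableAt_fderiv :
    ∀ p ∈ J ×ˢ closure Ω, DifferentiableAt ℝ (fderiv ℝ fun z => q (p.1, z)) p.2
  continuousOn_fderiv_fderiv : ContinuousOn
    (fun p : ℝ × EuclideanSpace ℝ (Fin N) => fderiv ℝ (fderiv ℝ fun z => q (p.1, z)) p.2)
    (J ×ˢ closure Ω)
  ae_le : ∀ᵐ p : ℝ × EuclideanSpace ℝ (Fin N), p ∈ J ×ˢ Ω →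
    qt p + spaceLaplacian (fun z => q (p.1, z)) p.2 ≤ A * q p

namespace IsNonnegSupersolution

theorem mono (hq : IsNonnegSupersolution J Ω A q qt) (hJ : J' ⊆ J) :
    IsNonnegSupersolution J' Ω A q qt :=
  have hsub : J' ×ˢ closure Ω ⊆ J ×ˢ closure Ω := prod_mono hJ subset_rfl
  { continuousOn := hq.continuousOn.mono hsub
    nonneg p hp := hq.nonneg p (hsub hp)
    hasDerivAt p hp := hq.hasDerivAt p (hsub hp)
    continuousOn_deriv := hq.continuousOn_deriv.mono hsub
    differentiableAt p hp := hq.differentiableAt p (hsub hp)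
    differentiableAt_fderiv p hp := hq.differentiableAt_fderiv p (hsub hp)
    continuousOn_fderiv_fderiv := hq.continuousOn_fderiv_fderiv.mono hsub
    ae_le := hq.ae_le.mono fun _ hp hpJ => hp ⟨hJ hpJ.1, hpJ.2⟩ }

theorem twiceContDiffOn (hq : IsNonnegSupersolution J Ω A q qt) {t : ℝ} (ht : t ∈ J) :
    TwiceContDiffOn (fun z => q (t, z)) (closure Ω) where
  differentiableAt x hx := hq.differentiableAt (t, x) ⟨ht, hx⟩
  differentiableAt_fderiv x hx := hq.differentiableAt_fderiv (t, x) ⟨ht, hx⟩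
  continuousOn_fderiv_fderiv := hq.continuousOn_fderiv_fderiv.comp
    (f := fun x : EuclideanSpace ℝ (Fin N) => (t, x)) (by fun_prop) fun _ hx => ⟨ht, hx⟩

theorem continuousOn_spaceLaplacian (hq : IsNonnegSupersolution J Ω A q qt) :
    ContinuousOn (fun p : ℝ × EuclideanSpace ℝ (Fin N) =>
      spaceLaplacian (fun z => q (p.1, z)) p.2) (J ×ˢ closure Ω) := by
  have hterm (v : EuclideanSpace ℝ (Fin N)) :=
    (hq.continuousOn_fderiv_fderiv.clm_apply (continuousOn_const (c := v))).clm_apply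
      (continuousOn_const (c := v))
  exact (continuousOn_finsetSum Finset.univ fun i _ => hterm (EuclideanSpace.single i 1)).congr
    fun p hp => spaceLaplacian_eq_sum_fderiv_fderiv (hq.differentiableAt_fderiv p hp)

end IsNonnegSupersolution

/-- `w` is an admissible test function for the duality argument: regular on `J × closure Ω`,
positive in `Ω` and zero on `∂Ω`; `wt` is its time derivative. -/
structure IsTestWeight (J : Set ℝ) (Ω : Set (EuclideanSpace ℝ (Fin N)))
    (w wt : ℝ × EuclideanSpace ℝ (Fin N) → ℝ) : Prop where
  contDiff : ∀ t ∈ J, ContDiff ℝ 2 fun x => w (t, x)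
  pos : ∀ t ∈ J, ∀ x ∈ Ω, 0 < w (t, x)
  eq_zero : ∀ t ∈ J, ∀ x ∈ frontier Ω, w (t, x) = 0
  hasDerivAt : ∀ p ∈ J ×ˢ Ω, HasDerivAt (fun τ => w (τ, p.2)) (wt p) p.1
  continuousOn : ContinuousOn w (J ×ˢ closure Ω)
  continuousOn_deriv : ContinuousOn wt (J ×ˢ closure Ω)
  continuousOn_spaceLaplacian : ContinuousOn (fun p : ℝ × EuclideanSpace ℝ (Fin N) =>
    spaceLaplacian (fun x => w (p.1, x)) p.2) (J ×ˢ closure Ω)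

theorem integrableOn_Ioc_prod_of_continuousOn (hΩb : Bornology.IsBounded Ω)
    {f : ℝ × EuclideanSpace ℝ (Fin N) → ℝ} (hf : ContinuousOn f (Icc t₁ t₂ ×ˢ closure Ω)) :
    IntegrableOn f (Ioc t₁ t₂ ×ˢ Ω) :=
  (hf.integrableOn_compact (isCompact_Icc.prod hΩb.isCompact_closure)).mono_set
    (prod_mono Ioc_subset_Icc_self subset_closure)

theorem integral_mul_spaceLaplacian_testWeight_le (hΩ : IsOpen Ω) (hΩb : Bornology.IsBounded Ω)
    (hw : IsTestWeight (Icc t₁ t₂) Ω w wt) (hq : IsNonnegSupersolution (Icc t₁ t₂) Ω A q qt) :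
    ∫ p in Ioc t₁ t₂ ×ˢ Ω, q p * spaceLaplacian (fun x => w (p.1, x)) p.2 ≤
      ∫ p in Ioc t₁ t₂ ×ˢ Ω, w p * spaceLaplacian (fun x => q (p.1, x)) p.2 := by
  have hqw := integrableOn_Ioc_prod_of_continuousOn hΩb
    (hq.continuousOn.fun_mul hw.continuousOn_spaceLaplacian)
  have hwq := integrableOn_Ioc_prod_of_continuousOn hΩb
    (hw.continuousOn.fun_mul hq.continuousOn_spaceLaplacian)
  rw [Measure.volume_eq_prod] at hqw hwq ⊢
  rw [setIntegral_prod _ hqw, setIntegral_prod _ hwq]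
  rw [IntegrableOn, ← Measure.prod_restrict] at hqw hwq
  refine setIntegral_mono_on hqw.integral_prod_left hwq.integral_prod_left measurableSet_Ioc
    fun t ht => ?_
  have ht' := Ioc_subset_Icc_self ht
  exact setIntegral_mul_spaceLaplacian_le hΩ hΩb (hw.contDiff t ht') (hw.pos t ht')
    (hw.eq_zero t ht') (hq.twiceContDiffOn ht')
    fun x hx => hq.nonneg (t, x) ⟨ht', subset_closure hx⟩

theorem neg_setIntegral_mul_testWeight_le (hΩ : IsOpen Ω) (hΩb : Bornology.IsBounded Ω)
    (ht : t₁ ≤ t₂) (hw : IsTestWeight (Icc t₁ t₂) Ω w wt)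
    (hq : IsNonnegSupersolution (Icc t₁ t₂) Ω A q qt) :
    -∫ x in Ω, q (t₁, x) * w (t₁, x) ≤ ∫ p in Ioc t₁ t₂ ×ˢ Ω, (qt p * w p + q p * wt p) := by
  have hslice {t : ℝ} (htt : t ∈ Icc t₁ t₂) : IntegrableOn (fun x => q (t, x) * w (t, x)) Ω :=
    integrableOn_of_continuousOn_closure hΩb
      ((hq.twiceContDiffOn htt).continuousOn.mul (hw.contDiff t htt).continuous.continuousOn)
  rw [Measure.volume_eq_prod, setIntegral_Ioc_prod_eq_setIntegral_sub hΩ.measurableSet ht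
    (f := fun p => q p * w p)
    (fun p hp => (hq.hasDerivAt p ⟨hp.1, subset_closure hp.2⟩).fun_mul (hw.hasDerivAt p hp))
    (integrableOn_Ioc_prod_of_continuousOn hΩb ((hq.continuousOn_deriv.fun_mul
      hw.continuousOn).add (hq.continuousOn.fun_mul hw.continuousOn_deriv))),
    integral_sub (hslice (right_mem_Icc.2 ht)) (hslice (left_mem_Icc.2 ht)), neg_le_sub_iff_le_add,
    le_add_iff_nonneg_left]
  exact setIntegral_nonneg hΩ.measurableSet fun x hx =>
    mul_nonneg (hq.nonneg _ ⟨right_mem_Icc.2 ht, subset_closure hx⟩)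
      (hw.pos _ (right_mem_Icc.2 ht) x hx).le

theorem integrableOn_mul_testWeight_operator (hΩb : Bornology.IsBounded Ω)
    (hw : IsTestWeight (Icc t₁ t₂) Ω w wt) (hq : IsNonnegSupersolution (Icc t₁ t₂) Ω A q qt) :
    IntegrableOn
      (fun p => q p * (spaceLaplacian (fun x => w (p.1, x)) p.2 - wt p - A * w p))
      (Ioc t₁ t₂ ×ˢ Ω) :=
  integrableOn_Ioc_prod_of_continuousOn hΩb (hq.continuousOn.mul
    ((hw.continuousOn_spaceLaplacian.sub hw.continuousOn_deriv).sub
      (continuousOn_const.mul hw.continuousOn)))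

theorem integral_mul_testWeight_operator_le (hΩ : IsOpen Ω) (hΩb : Bornology.IsBounded Ω)
    (ht : t₁ ≤ t₂) (hw : IsTestWeight (Icc t₁ t₂) Ω w wt)
    (hq : IsNonnegSupersolution (Icc t₁ t₂) Ω A q qt) :
    ∫ p in Ioc t₁ t₂ ×ˢ Ω, q p * (spaceLaplacian (fun x => w (p.1, x)) p.2 - wt p - A * w p) ≤
      ∫ x in Ω, q (t₁, x) * w (t₁, x) := by
  let Δq (p : ℝ × EuclideanSpace ℝ (Fin N)) := spaceLaplacian (fun x => q (p.1, x)) p.2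
  let Δw (p : ℝ × EuclideanSpace ℝ (Fin N)) := spaceLaplacian (fun x => w (p.1, x)) p.2
  have hqw : IntegrableOn (fun p => q p * Δw p) (Ioc t₁ t₂ ×ˢ Ω) :=
    integrableOn_Ioc_prod_of_continuousOn hΩb
      (hq.continuousOn.mul hw.continuousOn_spaceLaplacian)
  have hwq : IntegrableOn (fun p => w p * Δq p) (Ioc t₁ t₂ ×ˢ Ω) :=
    integrableOn_Ioc_prod_of_continuousOn hΩb
      (hw.continuousOn.mul hq.continuousOn_spaceLaplacian)
  have hdt : IntegrableOn (fun p => qt p * w p + q p * wt p) (Ioc t₁ t₂ ×ˢ Ω) :=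
    integrableOn_Ioc_prod_of_continuousOn hΩb ((hq.continuousOn_deriv.mul
      hw.continuousOn).add (hq.continuousOn.mul hw.continuousOn_deriv))
  calc ∫ p in Ioc t₁ t₂ ×ˢ Ω, q p * (Δw p - wt p - A * w p)
      ≤ ∫ p in Ioc t₁ t₂ ×ˢ Ω, (q p * Δw p - w p * Δq p - (qt p * w p + q p * wt p)) := by
        refine setIntegral_mono_on_ae (integrableOn_mul_testWeight_operator hΩb hw hq)
          ((hqw.fun_sub hwq).fun_sub hdt) (measurableSet_Ioc.prod hΩ.measurableSet) ?_
        filter_upwards [hq.ae_le] with p hp hpΩ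
        have hpJ : p.1 ∈ Icc t₁ t₂ := Ioc_subset_Icc_self hpΩ.1
        linarith [mul_le_mul_of_nonneg_left (hp ⟨hpJ, hpΩ.2⟩) (hw.pos p.1 hpJ p.2 hpΩ.2).le]
    _ = (∫ p in Ioc t₁ t₂ ×ˢ Ω, q p * Δw p) - (∫ p in Ioc t₁ t₂ ×ˢ Ω, w p * Δq p) -
          ∫ p in Ioc t₁ t₂ ×ˢ Ω, (qt p * w p + q p * wt p) := by
        rw [integral_sub (hqw.fun_sub hwq) hdt, integral_sub hqw hwq]
    _ ≤ ∫ x in Ω, q (t₁, x) * w (t₁, x) := by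
        linarith [integral_mul_spaceLaplacian_testWeight_le hΩ hΩb hw hq,
          neg_setIntegral_mul_testWeight_le hΩ hΩb ht hw hq]

end Duality

section Carleman

/-- The Carleman exponential `exp ((s / t) * (y - K))`, where `y` stands for the value of the
spatial weight `η`. It vanishes to infinite order as `t → 0⁺` when `y < K`. -/
noncomputable def carlemanExp (s K t y : ℝ) : ℝ :=
  exp (s / t * (y - K))

/-- The Carleman exponential, shifted by a function of `t` so as to vanish at `y = 0`, that is, on
the boundary of the domain. -/
noncomputable def carlemanWeight (s K t y : ℝ) : ℝ :=
  carlemanExp s K t y - carlemanExp s K t 0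

/-- The time derivative of `carlemanWeight s K t y`. -/
noncomputable def carlemanWeightDeriv (s K t y : ℝ) : ℝ :=
  s / t ^ 2 * ((K - y) * carlemanExp s K t y - K * carlemanExp s K t 0)

variable {s K L A c t y : ℝ}

theorem carlemanExp_pos (s K t y : ℝ) : 0 < carlemanExp s K t y :=
  exp_pos _

theorem carlemanWeight_pos (hs : 0 < s) (ht : 0 < t) (hy : 0 < y) : 0 < carlemanWeight s K t y := by
  rw [carlemanWeight, sub_pos, carlemanExp, carlemanExp, exp_lt_exp]
  gcongr

theorem carlemanWeight_le_carlemanExp (s K t y : ℝ) :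
    carlemanWeight s K t y ≤ carlemanExp s K t y :=
  sub_le_self _ (carlemanExp_pos s K t 0).le

theorem carlemanExp_le (hs : 0 ≤ s / t) (hyK : y + 1 ≤ K) : carlemanExp s K t y ≤ exp (-(s / t)) :=
  exp_le_exp.2 (by nlinarith)

theorem hasDerivAt_carlemanExp_right (s K t y : ℝ) :
    HasDerivAt (carlemanExp s K t) (carlemanExp s K t y * (s / t)) y := by
  convert! (((hasDerivAt_id y).sub_const K).const_mul (s / t)).exp using 1
  rw [mul_one, carlemanExp, id]

theorem hasDerivAt_carlemanWeight_right (s K t y : ℝ) :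
    HasDerivAt (carlemanWeight s K t) (carlemanExp s K t y * (s / t)) y :=
  (hasDerivAt_carlemanExp_right s K t y).sub_const _

theorem hasDerivAt_carlemanExp_left (s K y : ℝ) (ht : t ≠ 0) :
    HasDerivAt (fun τ => carlemanExp s K τ y) (s / t ^ 2 * ((K - y) * carlemanExp s K t y)) t := by
  convert! (((hasDerivAt_inv ht).const_mul s).mul_const (y - K)).exp using 1
  simp only [carlemanExp, div_eq_mul_inv]
  ring

theorem hasDerivAt_carlemanWeight_left (s K y : ℝ) (ht : t ≠ 0) :
    HasDerivAt (fun τ => carlemanWeight s K τ y) (carlemanWeightDeriv s K t y) t := by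
  convert! (hasDerivAt_carlemanExp_left s K y ht).sub (hasDerivAt_carlemanExp_left s K 0 ht) using 1
  simp only [carlemanWeightDeriv, sub_zero]
  ring

theorem spaceLaplacian_carlemanWeight_comp {N : ℕ} {η : EuclideanSpace ℝ (Fin N) → ℝ}
    (hη : ContDiff ℝ 2 η) (s K t : ℝ) (x : EuclideanSpace ℝ (Fin N)) :
    spaceLaplacian (fun z => carlemanWeight s K t (η z)) x =
      carlemanExp s K t (η x) *
        ((s / t) ^ 2 * ‖gradient η x‖ ^ 2 + s / t * spaceLaplacian η x) := by
  rw [spaceLaplacian_comp (hasDerivAt_carlemanWeight_right s K t)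
    ((hasDerivAt_carlemanExp_right s K t (η x)).mul_const (s / t)) hη]
  ring

theorem carlemanWeightDeriv_le (hs : 0 ≤ s) (ht : 0 < t) (hy : 0 ≤ y) (hK : 0 ≤ K)
    (hsK : 6 * K ≤ c * s) :
    carlemanWeightDeriv s K t y ≤ (s / t) ^ 2 * carlemanExp s K t y * (c / 6) := by
  have hE := (carlemanExp_pos s K t y).le
  have hE₀ := (carlemanExp_pos s K t 0).le
  calc carlemanWeightDeriv s K t y ≤ s / t ^ 2 * (c * s / 6 * carlemanExp s K t y) := by
        refine mul_le_mul_of_nonneg_left ?_ (by positivity)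
        nlinarith [mul_nonneg hy hE, mul_nonneg hK hE₀]
    _ = (s / t) ^ 2 * carlemanExp s K t y * (c / 6) := by field_simp

-- Of the dominant term `(s / t)² φ g`, three slices of relative size `c / 6` absorb the
-- lower-order term of the Laplacian, the time derivative and the potential.
theorem mul_sub_half_le_carlemanWeight_operator {g l : ℝ} (hs : 0 ≤ s) (ht : 0 < t) (hy : 0 ≤ y)
    (hK : 0 ≤ K) (hA : 0 ≤ A) (hl : |l| ≤ L) (hsK : 6 * K ≤ c * s) (hsL : 6 * L ≤ c * (s / t))
    (hsA : 6 * A ≤ c * (s / t) ^ 2) :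
    (s / t) ^ 2 * carlemanExp s K t y * (g - c / 2) ≤
      carlemanExp s K t y * ((s / t) ^ 2 * g + s / t * l) - carlemanWeightDeriv s K t y -
        A * carlemanWeight s K t y := by
  have hE := (carlemanExp_pos s K t y).le
  have hderiv := carlemanWeightDeriv_le hs ht hy hK hsK
  have hpotential : A * carlemanWeight s K t y ≤ c * (s / t) ^ 2 / 6 * carlemanExp s K t y :=
    (mul_le_mul_of_nonneg_left (carlemanWeight_le_carlemanExp s K t y) hA).trans
      (mul_le_mul_of_nonneg_right (by linarith) hE)
  have hlaplacian : carlemanExp s K t y * (s / t) * -l ≤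
      carlemanExp s K t y * (s / t) * (c * (s / t) / 6) :=
    mul_le_mul_of_nonneg_left (by linarith [neg_abs_le l]) (by positivity)
  linarith

variable {N : ℕ} {Ω ω : Set (EuclideanSpace ℝ (Fin N))} {η : EuclideanSpace ℝ (Fin N) → ℝ}

/-- `η` is a Fursikov–Imanuvilov weight for the pair `(Ω, ω)`, positive in `Ω`, zero on `∂Ω` and
without critical points outside `ω`. The constants quantify this: `c` bounds `‖∇η‖²` from below
outside `ω`, `L` bounds `|Δη|`, and `K` exceeds `η` by at least one. -/
structure IsFursikovImanuvilovWeight (Ω ω : Set (EuclideanSpace ℝ (Fin N)))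
    (η : EuclideanSpace ℝ (Fin N) → ℝ) (c K L : ℝ) : Prop where
  contDiff : ContDiff ℝ 2 η
  pos : ∀ x ∈ Ω, 0 < η x
  eq_zero : ∀ x ∈ frontier Ω, η x = 0
  c_pos : 0 < c
  K_nonneg : 0 ≤ K
  L_nonneg : 0 ≤ L
  add_one_le : ∀ x ∈ Ω, η x + 1 ≤ K
  abs_spaceLaplacian_le : ∀ x ∈ Ω, |spaceLaplacian η x| ≤ L
  le_norm_gradient_sq : ∀ x ∈ Ω \ ω, c ≤ ‖gradient η x‖ ^ 2

theorem exists_isFursikovImanuvilovWeight (hΩb : Bornology.IsBounded Ω) (hη : ContDiff ℝ 2 η)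
    (hη_pos : ∀ x ∈ Ω, 0 < η x) (hη₀ : ∀ x ∈ frontier Ω, η x = 0)
    (hη_grad : ∀ x ∈ closure (Ω \ ω), 0 < ‖gradient η x‖) :
    ∃ c K L, IsFursikovImanuvilovWeight Ω ω η c K L := by
  obtain ⟨M, hM⟩ := hΩb.isCompact_closure.exists_bound_of_continuousOn hη.continuous.continuousOn
  obtain ⟨L, hL⟩ := hΩb.isCompact_closure.exists_bound_of_continuousOn
    (TwiceContDiffOn.of_contDiff hη).continuousOn_spaceLaplacian
  obtain ⟨c, hc, hcη⟩ := (hΩb.subset sdiff_subset).isCompact_closure.exists_forall_le'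
    ((continuous_gradient (hη.of_le one_le_two)).norm.pow 2).continuousOn
    fun x hx => pow_pos (hη_grad x hx) 2
  refine ⟨c, |M| + 1, |L|, hη, hη_pos, hη₀, hc, by positivity, abs_nonneg L, fun x hx => ?_,
    fun x hx => (hL x (subset_closure hx)).trans (le_abs_self L),
    fun x hx => hcη x (subset_closure hx)⟩
  have hηM : η x ≤ |M| := (le_abs_self _).trans ((hM x (subset_closure hx)).trans (le_abs_self M))
  linarith

/-- The integrand `(s / t)² exp ((s / t) (η - K)) q` of both sides of the Carleman estimate. -/
noncomputable def carlemanDensity (s K : ℝ) (η : EuclideanSpace ℝ (Fin N) → ℝ)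
    (q : ℝ × EuclideanSpace ℝ (Fin N) → ℝ) (p : ℝ × EuclideanSpace ℝ (Fin N)) : ℝ :=
  (s / p.1) ^ 2 * carlemanExp s K p.1 (η p.2) * q p

theorem carlemanDensity_nonneg {q : ℝ × EuclideanSpace ℝ (Fin N) → ℝ}
    {p : ℝ × EuclideanSpace ℝ (Fin N)} (hq : 0 ≤ q p) (s K : ℝ)
    (η : EuclideanSpace ℝ (Fin N) → ℝ) : 0 ≤ carlemanDensity s K η q p :=
  mul_nonneg (mul_nonneg (sq_nonneg _) (carlemanExp_pos ..).le) hq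

namespace IsFursikovImanuvilovWeight

variable {t₁ t₂ : ℝ} {q qt : ℝ × EuclideanSpace ℝ (Fin N) → ℝ}

theorem integrableOn_carlemanDensity (hη : IsFursikovImanuvilovWeight Ω ω η c K L)
    (hΩb : Bornology.IsBounded Ω) (ht₁ : 0 < t₁) (s : ℝ)
    (hq : ContinuousOn q (Icc t₁ t₂ ×ˢ closure Ω)) :
    IntegrableOn (carlemanDensity s K η q) (Ioc t₁ t₂ ×ˢ Ω) := by
  refine integrableOn_Ioc_prod_of_continuousOn hΩb ?_
  have hηc := hη.contDiff.continuous
  have ht (p) (hp : p ∈ Icc t₁ t₂ ×ˢ closure Ω) : p.1 ≠ 0 := (ht₁.trans_le hp.1.1).ne'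
  unfold carlemanDensity carlemanExp
  fun_prop (disch := assumption)

theorem isTestWeight_carlemanWeight (hη : IsFursikovImanuvilovWeight Ω ω η c K L) (ht₁ : 0 < t₁)
    (hs : 0 < s) :
    IsTestWeight (Icc t₁ t₂) Ω (fun p => carlemanWeight s K p.1 (η p.2))
      (fun p => carlemanWeightDeriv s K p.1 (η p.2)) := by
  have hηc := hη.contDiff.continuous
  have hlap : Continuous (spaceLaplacian η) :=
    continuousOn_univ.1 (TwiceContDiffOn.of_contDiff hη.contDiff).continuousOn_spaceLaplacian
  have hgrad := continuous_gradient (hη.contDiff.of_le one_le_two)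
  have ht (p) (hp : p ∈ Icc t₁ t₂ ×ˢ closure Ω) : p.1 ≠ 0 := (ht₁.trans_le hp.1.1).ne'
  refine ⟨fun t _ => ?_, fun t htt x hx => carlemanWeight_pos hs (ht₁.trans_le htt.1) (hη.pos x hx),
    fun t _ x hx => ?_, fun p hp => hasDerivAt_carlemanWeight_left s K
      (η p.2) (ht₁.trans_le hp.1.1).ne', ?_, ?_, ?_⟩
  · simp only [carlemanWeight, carlemanExp]
    exact (contDiff_const.mul (hη.contDiff.sub contDiff_const)).exp.sub contDiff_const
  · rw [hη.eq_zero x hx, carlemanWeight, sub_self]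
  · unfold carlemanWeight carlemanExp
    fun_prop (disch := assumption)
  · have ht_sq (p) (hp : p ∈ Icc t₁ t₂ ×ˢ closure Ω) : p.1 ^ 2 ≠ 0 := pow_ne_zero 2 (ht p hp)
    unfold carlemanWeightDeriv carlemanExp
    fun_prop (disch := assumption)
  · simp_rw [spaceLaplacian_carlemanWeight_comp hη.contDiff]
    unfold carlemanExp
    fun_prop (disch := assumption)

theorem carlemanDensity_mul_sub_half_le (hη : IsFursikovImanuvilovWeight Ω ω η c K L)
    (ht₁ : 0 < t₁) (hs : 0 < s) (hA : 0 ≤ A) (hsK : 6 * K ≤ c * s) (hsL : 6 * L ≤ c * (s / t₂))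
    (hsA : 6 * A ≤ c * (s / t₂) ^ 2) {p : ℝ × EuclideanSpace ℝ (Fin N)}
    (hp : p ∈ Ioc t₁ t₂ ×ˢ Ω) (hq : 0 ≤ q p) :
    carlemanDensity s K η q p * (‖gradient η p.2‖ ^ 2 - c / 2) ≤
      q p * (spaceLaplacian (fun x => carlemanWeight s K p.1 (η x)) p.2 -
        carlemanWeightDeriv s K p.1 (η p.2) - A * carlemanWeight s K p.1 (η p.2)) := by
  have hp₁ : 0 < p.1 := ht₁.trans hp.1.1
  have ht₂ : 0 < t₂ := hp₁.trans_le hp.1.2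
  have hst : s / t₂ ≤ s / p.1 := div_le_div_of_nonneg_left hs.le hp₁ hp.1.2
  have hst_sq : (s / t₂) ^ 2 ≤ (s / p.1) ^ 2 := by gcongr
  rw [spaceLaplacian_carlemanWeight_comp hη.contDiff]
  calc carlemanDensity s K η q p * (‖gradient η p.2‖ ^ 2 - c / 2)
      = q p * ((s / p.1) ^ 2 * carlemanExp s K p.1 (η p.2) *
          (‖gradient η p.2‖ ^ 2 - c / 2)) := by rw [carlemanDensity]; ring
    _ ≤ _ := mul_le_mul_of_nonneg_left
        (mul_sub_half_le_carlemanWeight_operator hs.le hp₁ (hη.pos _ hp.2).le hη.K_nonneg hA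
          (hη.abs_spaceLaplacian_le _ hp.2) hsK
          (hsL.trans (mul_le_mul_of_nonneg_left hst hη.c_pos.le))
          (hsA.trans (mul_le_mul_of_nonneg_left hst_sq hη.c_pos.le))) hq

theorem half_mul_carlemanDensity_sub_indicator_le (hη : IsFursikovImanuvilovWeight Ω ω η c K L)
    (ht₁ : 0 < t₁) (hs : 0 < s) (hA : 0 ≤ A) (hsK : 6 * K ≤ c * s) (hsL : 6 * L ≤ c * (s / t₂))
    (hsA : 6 * A ≤ c * (s / t₂) ^ 2) {p : ℝ × EuclideanSpace ℝ (Fin N)}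
    (hp : p ∈ Ioc t₁ t₂ ×ˢ Ω) (hq : 0 ≤ q p) :
    c / 2 * carlemanDensity s K η q p -
        c * (Ioc t₁ t₂ ×ˢ ω).indicator (carlemanDensity s K η q) p ≤
      q p * (spaceLaplacian (fun x => carlemanWeight s K p.1 (η x)) p.2 -
        carlemanWeightDeriv s K p.1 (η p.2) - A * carlemanWeight s K p.1 (η p.2)) :=
  have hgrad (hpω : p ∉ Ioc t₁ t₂ ×ˢ ω) : c ≤ ‖gradient η p.2‖ ^ 2 :=
    hη.le_norm_gradient_sq p.2 ⟨hp.2, fun h => hpω ⟨hp.1, h⟩⟩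
  (half_mul_sub_indicator_le (carlemanDensity_nonneg hq s K η) (sq_nonneg _) hgrad).trans
    (hη.carlemanDensity_mul_sub_half_le ht₁ hs hA hsK hsL hsA hp hq)

theorem carleman_estimate (hη : IsFursikovImanuvilovWeight Ω ω η c K L) (hΩ : IsOpen Ω)
    (hΩb : Bornology.IsBounded Ω) (hω : MeasurableSet ω) (hωΩ : ω ⊆ Ω) (ht₁ : 0 < t₁)
    (ht : t₁ ≤ t₂) (hs : 0 < s) (hA : 0 ≤ A) (hsK : 6 * K ≤ c * s) (hsL : 6 * L ≤ c * (s / t₂))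
    (hsA : 6 * A ≤ c * (s / t₂) ^ 2) (hq : IsNonnegSupersolution (Icc t₁ t₂) Ω A q qt) :
    c / 2 * ∫ p in Ioc t₁ t₂ ×ˢ Ω, carlemanDensity s K η q p ≤
      c * (∫ p in Ioc t₁ t₂ ×ˢ ω, carlemanDensity s K η q p) +
        ∫ x in Ω, q (t₁, x) * carlemanWeight s K t₁ (η x) := by
  have hw := hη.isTestWeight_carlemanWeight ht₁ (t₂ := t₂) hs
  have hcoercive := mul_setIntegral_sub_le_of_indicator_le (measurableSet_Ioc.prod hω)
    (measurableSet_Ioc.prod hΩ.measurableSet) (prod_mono subset_rfl hωΩ)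
    (hη.integrableOn_carlemanDensity hΩb ht₁ s hq.continuousOn)
    (integrableOn_mul_testWeight_operator hΩb hw hq) fun p hp =>
      hη.half_mul_carlemanDensity_sub_indicator_le ht₁ hs hA hsK hsL hsA hp
        (hq.nonneg p ⟨Ioc_subset_Icc_self hp.1, subset_closure hp.2⟩)
  have hduality := integral_mul_testWeight_operator_le hΩ hΩb ht hw hq
  linarith

end IsFursikovImanuvilovWeight

end Carleman

section Observability

variable {N : ℕ} {Ω ω : Set (EuclideanSpace ℝ (Fin N))} {η : EuclideanSpace ℝ (Fin N) → ℝ}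
  {c s r t t₁ t₂ A K L T : ℝ} {q qt : ℝ × EuclideanSpace ℝ (Fin N) → ℝ}

theorem exp_neg_mul_le_carlemanDensity {p : ℝ × EuclideanSpace ℝ (Fin N)} (hK : 0 ≤ K)
    (hη : 0 ≤ η p.2) (hs : 1 ≤ s / p.1) (hsr : s / p.1 ≤ r) (hq : 0 ≤ q p) :
    exp (-(r * K)) * q p ≤ carlemanDensity s K η q p := by
  have hexp : exp (-(r * K)) ≤ carlemanExp s K p.1 (η p.2) := by
    refine exp_le_exp.2 ?_
    linarith [mul_le_mul_of_nonneg_right hsr hK, mul_nonneg (zero_le_one.trans hs) hη]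
  exact mul_le_mul_of_nonneg_right (hexp.trans
    (le_mul_of_one_le_left (carlemanExp_pos ..).le (one_le_pow₀ hs))) hq

theorem carlemanDensity_le {p : ℝ × EuclideanSpace ℝ (Fin N)} (hs : 0 ≤ s / p.1)
    (hηK : η p.2 + 1 ≤ K) (hq : 0 ≤ q p) : carlemanDensity s K η q p ≤ 2 * q p := by
  refine mul_le_mul_of_nonneg_right ?_ hq
  calc (s / p.1) ^ 2 * carlemanExp s K p.1 (η p.2)
      ≤ 2 * exp (s / p.1) * exp (-(s / p.1)) := by
        have hexp := quadratic_le_exp_of_nonneg hs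
        exact mul_le_mul (by linarith) (carlemanExp_le hs hηK) (carlemanExp_pos ..).le
          (by positivity)
    _ = 2 := by rw [mul_assoc, ← exp_add, add_neg_cancel, exp_zero, mul_one]

theorem setIntegral_carlemanDensity_le {I : Set ℝ} (hI : MeasurableSet I)
    (hω : MeasurableSet ω) (hsub : Ioc t₁ t₂ ⊆ I) (hs : 0 ≤ s) (ht₁ : 0 < t₁)
    (hηK : ∀ x ∈ ω, η x + 1 ≤ K)
    (hΦ : IntegrableOn (carlemanDensity s K η q) (Ioc t₁ t₂ ×ˢ ω))
    (hq : IntegrableOn q (I ×ˢ ω)) (hq₀ : ∀ p ∈ I ×ˢ ω, 0 ≤ q p) :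
    ∫ p in Ioc t₁ t₂ ×ˢ ω, carlemanDensity s K η q p ≤ 2 * ∫ p in I ×ˢ ω, q p := by
  rw [← integral_const_mul]
  have hsub' : Ioc t₁ t₂ ×ˢ ω ⊆ I ×ˢ ω := prod_mono hsub subset_rfl
  exact setIntegral_le_setIntegral_of_subset (measurableSet_Ioc.prod hω) (hI.prod hω) hsub' hΦ
    (hq.const_mul 2)
    (fun p hp => carlemanDensity_le (div_nonneg hs (ht₁.trans hp.1.1).le) (hηK p.2 hp.2)
      (hq₀ p (hsub' hp)))
    fun p hp => mul_nonneg zero_le_two (hq₀ p hp)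

namespace IsFursikovImanuvilovWeight

theorem setIntegral_mul_carlemanWeight_le (hη : IsFursikovImanuvilovWeight Ω ω η c K L)
    (hΩb : Bornology.IsBounded Ω) (hs : 0 < s) (ht : 0 < t)
    {f : EuclideanSpace ℝ (Fin N) → ℝ} {B : ℝ} (hf : ∀ x ∈ Ω, ‖f x‖ ≤ B) :
    ∫ x in Ω, f x * carlemanWeight s K t (η x) ≤ B * exp (-(s / t)) * volume.real Ω := by
  refine (le_norm_self _).trans
    (norm_setIntegral_le_of_norm_le_const hΩb.measure_lt_top fun x hx => ?_)
  have hw : ‖carlemanWeight s K t (η x)‖ ≤ exp (-(s / t)) := by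
    rw [norm_of_nonneg (carlemanWeight_pos hs ht (hη.pos x hx)).le]
    exact (carlemanWeight_le_carlemanExp ..).trans
      (carlemanExp_le (div_pos hs ht).le (hη.add_one_le x hx))
  rw [norm_mul]
  gcongr
  exacts [(norm_nonneg _).trans (hf x hx), hf x hx]

theorem mul_setIntegral_le_setIntegral_carlemanDensity
    (hη : IsFursikovImanuvilovWeight Ω ω η c K L) (hΩ : IsOpen Ω) (hr : 1 ≤ r) (hT : 0 < T)
    (ht₁ : 0 < t₁) (ht₁T : t₁ ≤ T / 4)
    (hq : IntegrableOn q (Ioo (T / 4) (3 * T / 4) ×ˢ Ω))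
    (hΦ : IntegrableOn (carlemanDensity (r * T) K η q) (Ioc t₁ (3 * T / 4) ×ˢ Ω))
    (hq₀ : ∀ p ∈ Ioc t₁ (3 * T / 4) ×ˢ Ω, 0 ≤ q p) :
    exp (-(4 * r * K)) * ∫ p in Ioo (T / 4) (3 * T / 4) ×ˢ Ω, q p ≤
      ∫ p in Ioc t₁ (3 * T / 4) ×ˢ Ω, carlemanDensity (r * T) K η q p := by
  rw [← integral_const_mul]
  have hsub : Ioo (T / 4) (3 * T / 4) ×ˢ Ω ⊆ Ioc t₁ (3 * T / 4) ×ˢ Ω :=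
    prod_mono (fun t ht => ⟨ht₁T.trans_lt ht.1, ht.2.le⟩) subset_rfl
  refine setIntegral_le_setIntegral_of_subset (measurableSet_Ioo.prod hΩ.measurableSet)
    (measurableSet_Ioc.prod hΩ.measurableSet) hsub (hq.const_mul _) hΦ (fun p hp => ?_)
    fun p hp => carlemanDensity_nonneg (hq₀ p hp) _ _ _
  have hp₁ : 0 < p.1 := ht₁.trans (hsub hp).1.1
  refine exp_neg_mul_le_carlemanDensity hη.K_nonneg (hη.pos p.2 hp.2).le ?_ ?_ (hq₀ p (hsub hp))
  · rw [one_le_div hp₁]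
    nlinarith [hp.1.2]
  · rw [div_le_iff₀ hp₁]
    nlinarith [hp.1.1]

theorem mul_setIntegral_le_add_exp (hη : IsFursikovImanuvilovWeight Ω ω η c K L) (hΩ : IsOpen Ω)
    (hΩb : Bornology.IsBounded Ω) (hω : MeasurableSet ω) (hωΩ : ω ⊆ Ω) (hT : 0 < T) (hA : 0 ≤ A)
    (hr : 1 ≤ r) (hrK : 6 * K ≤ c * (r * T)) (hrL : 6 * L ≤ c * r) (hrA : 6 * A ≤ c * r ^ 2)
    (hqc : ContinuousOn q (Icc 0 T ×ˢ closure Ω)) {B : ℝ}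
    (hqB : ∀ p ∈ Icc 0 T ×ˢ closure Ω, ‖q p‖ ≤ B)
    (hq : IsNonnegSupersolution (Ioo 0 T) Ω A q qt) (ht₁ : t₁ ∈ Ioo 0 (T / 4)) :
    c / 2 * (exp (-(4 * r * K)) * ∫ p in Ioo (T / 4) (3 * T / 4) ×ˢ Ω, q p) ≤
      c * (2 * ∫ p in Ioo 0 T ×ˢ ω, q p) + B * exp (-(r * T / t₁)) * volume.real Ω := by
  have hJ : Icc t₁ (3 * T / 4) ⊆ Ioo 0 T := Icc_subset_Ioo ht₁.1 (by linarith)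
  have hq' := hq.mono hJ
  have hqint := hqc.integrableOn_compact (isCompact_Icc.prod hΩb.isCompact_closure) (μ := volume)
  have hΦ := hη.integrableOn_carlemanDensity hΩb ht₁.1 (r * T) hq'.continuousOn
  have hrt : r ≤ r * T / (3 * T / 4) := by
    rw [le_div_iff₀ (by positivity)]
    nlinarith
  have hc := hη.c_pos.le
  have hcarleman := hη.carleman_estimate hΩ hΩb hω hωΩ ht₁.1 (by linarith [ht₁.2])
    (s := r * T) (by positivity) hA hrK (hrL.trans (by gcongr)) (hrA.trans (by gcongr)) hq'
  have hlower := hη.mul_setIntegral_le_setIntegral_carlemanDensity hΩ hr hT ht₁.1 ht₁.2.le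
    (hqint.mono_set (prod_mono (Ioo_subset_Icc_self.trans
      (Icc_subset_Icc (by positivity) (by linarith))) subset_closure)) hΦ
    fun p hp => hq'.nonneg p ⟨Ioc_subset_Icc_self hp.1, subset_closure hp.2⟩
  have hupper := setIntegral_carlemanDensity_le measurableSet_Ioo hω
    (Ioc_subset_Icc_self.trans hJ) (s := r * T) (by positivity) ht₁.1
    (fun x hx => hη.add_one_le x (hωΩ hx)) (hΦ.mono_set (prod_mono subset_rfl hωΩ))
    (hqint.mono_set (prod_mono Ioo_subset_Icc_self (hωΩ.trans subset_closure)))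
    fun p hp => hq.nonneg p ⟨hp.1, subset_closure (hωΩ hp.2)⟩
  have hinitial := hη.setIntegral_mul_carlemanWeight_le hΩb (s := r * T) (by positivity) ht₁.1
    fun x hx => hqB (t₁, x) ⟨Ioo_subset_Icc_self (hJ (left_mem_Icc.2 (by linarith [ht₁.2]))),
      subset_closure hx⟩
  calc c / 2 * (exp (-(4 * r * K)) * ∫ p in Ioo (T / 4) (3 * T / 4) ×ˢ Ω, q p)
      ≤ c / 2 * ∫ p in Ioc t₁ (3 * T / 4) ×ˢ Ω, carlemanDensity (r * T) K η q p := by gcongr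
    _ ≤ _ := hcarleman.trans (by gcongr)

theorem setIntegral_le_exp_mul (hη : IsFursikovImanuvilovWeight Ω ω η c K L) (hΩ : IsOpen Ω)
    (hΩb : Bornology.IsBounded Ω) (hω : MeasurableSet ω) (hωΩ : ω ⊆ Ω) (hT : 0 < T) (hA : 0 ≤ A)
    (hr : 1 ≤ r) (hrK : 6 * K ≤ c * (r * T)) (hrL : 6 * L ≤ c * r) (hrA : 6 * A ≤ c * r ^ 2)
    (hqc : ContinuousOn q (Icc 0 T ×ˢ closure Ω))
    (hq : IsNonnegSupersolution (Ioo 0 T) Ω A q qt) :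
    ∫ p in Ioo (T / 4) (3 * T / 4) ×ˢ Ω, q p ≤
      exp (4 * r * K) * (4 * ∫ p in Ioo 0 T ×ˢ ω, q p) := by
  obtain ⟨B, hB⟩ := (isCompact_Icc.prod hΩb.isCompact_closure).exists_bound_of_continuousOn hqc
  have hlim : Tendsto (fun t₁ : ℝ => c * (2 * ∫ p in Ioo 0 T ×ˢ ω, q p) +
      B * exp (-(r * T / t₁)) * volume.real Ω) (𝓝[>] 0)
      (𝓝 (c * (2 * ∫ p in Ioo 0 T ×ˢ ω, q p) + B * 0 * volume.real Ω)) :=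
    (((tendsto_exp_neg_div_nhdsGT_zero (by positivity)).const_mul B).mul_const _).const_add _
  have hle := ge_of_tendsto hlim <| by
    filter_upwards [Ioo_mem_nhdsGT (show 0 < T / 4 by positivity)] with t₁ ht₁
    exact hη.mul_setIntegral_le_add_exp hΩ hΩb hω hωΩ hT hA hr hrK hrL hrA hqc hB hq ht₁
  rw [exp_neg] at hle
  rw [← inv_mul_le_iff₀ (exp_pos _)]
  refine le_of_mul_le_mul_left ?_ (half_pos hη.c_pos)
  linarith

end IsFursikovImanuvilovWeight

end Observability

theorem exists_le_carleman_parameter {c K L : ℝ} (hc : 0 < c) (hK : 0 ≤ K) (hL : 0 ≤ L) :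
    ∃ D > 0, ∀ T A r : ℝ, 0 < T → 0 ≤ A → r = D * (1 + 1 / T + √A) →
      1 ≤ r ∧ 6 * K ≤ c * (r * T) ∧ 6 * L ≤ c * r ∧ 6 * A ≤ c * r ^ 2 := by
  set D := 1 + 6 * (K + L + 1) / c with hD
  have hcD : c * D = c + 6 * (K + L + 1) := by rw [hD]; field_simp
  have hD₁ : 1 ≤ D := le_add_of_nonneg_right (by positivity)
  refine ⟨D, zero_lt_one.trans_le hD₁, fun T A r hT hA hr => ?_⟩
  have hDr : D ≤ r := by
    rw [hr]
    exact le_mul_of_one_le_right (by positivity)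
      ((le_add_of_nonneg_right (by positivity)).trans (le_add_of_nonneg_right (by positivity)))
  have hDrT : D ≤ r * T := by
    rw [show r * T = D * (1 + T * (1 + √A)) by rw [hr]; field_simp; ring]
    exact le_mul_of_one_le_right (by positivity) (le_add_of_nonneg_right (by positivity))
  have hAr : A ≤ D * A := le_mul_of_one_le_left hA hD₁
  have hDA : D ^ 2 * A ≤ r ^ 2 := by
    have hDA_sqrt : D * √A ≤ r := by
      rw [hr]
      gcongr
      exact le_add_of_nonneg_left (by positivity)
    calc D ^ 2 * A = (D * √A) ^ 2 := by rw [mul_pow, sq_sqrt hA]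
      _ ≤ r ^ 2 := by gcongr
  refine ⟨hD₁.trans hDr, ?_, ?_, ?_⟩
  · linarith [mul_le_mul_of_nonneg_left hDrT hc.le]
  · linarith [mul_le_mul_of_nonneg_left hDr hc.le]
  · calc 6 * A ≤ c * D * (D * A) := by
          rw [hcD]
          exact mul_le_mul (by linarith) hAr hA (by positivity)
      _ = c * (D ^ 2 * A) := by ring
      _ ≤ c * r ^ 2 := by gcongr

theorem ae_le_mul_of_backward_heat_eq {N : ℕ} {J : Set ℝ} {Ω : Set (EuclideanSpace ℝ (Fin N))}
    (hJ : MeasurableSet J) (hΩ : MeasurableSet Ω) {a q qt : ℝ × EuclideanSpace ℝ (Fin N) → ℝ}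
    (ha : Measurable a) {B : ℝ} (haB : ∀ p ∈ J ×ˢ Ω, |a p| ≤ B) (hq : ∀ p ∈ J ×ˢ Ω, 0 ≤ q p)
    (heq : ∀ t ∈ J, ∀ x ∈ Ω,
      -qt (t, x) - spaceLaplacian (fun z => q (t, z)) x + a (t, x) * q (t, x) = 0) :
    ∀ᵐ p : ℝ × EuclideanSpace ℝ (Fin N), p ∈ J ×ˢ Ω →
      qt p + spaceLaplacian (fun z => q (p.1, z)) p.2 ≤
        (eLpNorm a ⊤ (volume.restrict (J ×ˢ Ω))).toReal * q p := by
  have hJΩ : MeasurableSet (J ×ˢ Ω) := hJ.prod hΩ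
  have ha_memLp : MemLp a ⊤ (volume.restrict (J ×ˢ Ω)) :=
    memLp_top_of_bound ha.aestronglyMeasurable B (ae_restrict_of_forall_mem hJΩ haB)
  have ha_le := ae_le_lpNorm_exponent_top ha_memLp
  rw [← toReal_eLpNorm ha.aestronglyMeasurable, ae_restrict_iff' hJΩ] at ha_le
  filter_upwards [ha_le] with p hp hpJ
  linarith [heq p.1 hpJ.1 p.2 hpJ.2,
    mul_le_mul_of_nonneg_right ((le_abs_self _).trans (hp hpJ)) (hq p hpJ)]

theorem observability_L1_L1_general {N : ℕ} {Ω ω : Set (EuclideanSpace ℝ (Fin N))}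
    (hΩ : IsOpen Ω) (hΩb : Bornology.IsBounded Ω) (hω : MeasurableSet ω) (hωΩ : ω ⊆ Ω)
    {η : EuclideanSpace ℝ (Fin N) → ℝ} (hη : ContDiff ℝ 2 η) (hη_pos : ∀ x ∈ Ω, 0 < η x)
    (hη₀ : ∀ x ∈ frontier Ω, η x = 0) (hη_grad : ∀ x ∈ closure (Ω \ ω), 0 < ‖gradient η x‖) :
    ∃ C > 0, ∀ T A : ℝ, 0 < T → 0 ≤ A → ∀ q qt : ℝ × EuclideanSpace ℝ (Fin N) → ℝ,
      ContinuousOn q (Icc 0 T ×ˢ closure Ω) → IsNonnegSupersolution (Ioo 0 T) Ω A q qt →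
      ∫ t in Ioo (T / 4) (3 * T / 4), ∫ x in Ω, q (t, x) ≤
        exp (C * (1 + 1 / T + √A)) * ∫ t in Ioo 0 T, ∫ x in ω, q (t, x) := by
  obtain ⟨c, K, L, hweight⟩ := exists_isFursikovImanuvilovWeight hΩb hη hη_pos hη₀ hη_grad
  have hK := hweight.K_nonneg
  obtain ⟨D, hD, hparam⟩ := exists_le_carleman_parameter hweight.c_pos hK hweight.L_nonneg
  refine ⟨4 * D * K + 2, by positivity, fun T A hT hA q qt hqc hq => ?_⟩
  obtain ⟨hr, hrK, hrL, hrA⟩ := hparam T A _ hT hA rfl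
  have hobs := hweight.setIntegral_le_exp_mul hΩ hΩb hω hωΩ hT hA hr hrK hrL hrA hqc hq
  have hqint := hqc.integrableOn_compact (isCompact_Icc.prod hΩb.isCompact_closure) (μ := volume)
  have hW : 0 ≤ ∫ p in Ioo 0 T ×ˢ ω, q p := setIntegral_nonneg (measurableSet_Ioo.prod hω)
    fun p hp => hq.nonneg p ⟨hp.1, subset_closure (hωΩ hp.2)⟩
  rw [Measure.volume_eq_prod] at hobs hqint hW
  rw [← setIntegral_prod _ (hqint.mono_set (prod_mono (Ioo_subset_Icc_self.trans
      (Icc_subset_Icc (by positivity) (by linarith))) subset_closure)),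
    ← setIntegral_prod _ (hqint.mono_set (prod_mono Ioo_subset_Icc_self
      (hωΩ.trans subset_closure)))]
  have hX : 1 ≤ 1 + 1 / T + √A :=
    (le_add_of_nonneg_right (by positivity)).trans (le_add_of_nonneg_right (by positivity))
  calc _ ≤ _ := hobs
    _ ≤ exp (4 * (D * (1 + 1 / T + √A)) * K) * (exp (2 * (1 + 1 / T + √A)) * _) := by
        gcongr
        exact four_le_exp_two_mul hX
    _ = _ := by
        rw [← mul_assoc, ← exp_add]
        ring_nf

theorem observability_L1_L1
    (N : ℕ) (hN : 1 ≤ N)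
    (Ω ω₀ ω : Set (EuclideanSpace ℝ (Fin N)))
    (hΩo : IsOpen Ω) (hΩb : Bornology.IsBounded Ω) (hΩc : IsConnected Ω)
    (hω₀o : IsOpen ω₀) (hω₀ne : ω₀.Nonempty) (hωo : IsOpen ω) (hωne : ω.Nonempty)
    (hω₀ω : closure ω₀ ⊆ ω) (hωΩ : ω ⊆ Ω)
    (η : EuclideanSpace ℝ (Fin N) → ℝ) (hη : ContDiff ℝ 2 η)
    (hηpos : ∀ x ∈ Ω, 0 < η x) (hηbd : ∀ x ∈ frontier Ω, η x = 0)
    (hηgrad : ∀ x ∈ closure (Ω \ ω₀), 0 < ‖gradient η x‖) :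
    ∃ C > (0:ℝ),
      ∀ T : ℝ, 0 < T →
      ∀ a : ℝ × EuclideanSpace ℝ (Fin N) → ℝ, Measurable a →
      (∃ B : ℝ, ∀ p ∈ Set.Ioo (0:ℝ) T ×ˢ Ω, |a p| ≤ B) →
      ∀ q qt : ℝ × EuclideanSpace ℝ (Fin N) → ℝ,
        ContinuousOn q (Set.Icc 0 T ×ˢ closure Ω) →
        (∀ p ∈ Set.Icc 0 T ×ˢ closure Ω, 0 ≤ q p) →
        (∀ p ∈ Set.Ioo 0 T ×ˢ closure Ω,
          HasDerivAt (fun τ => q (τ, p.2)) (qt p) p.1) →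
        ContinuousOn qt (Set.Ioo 0 T ×ˢ closure Ω) →
        (∀ p ∈ Set.Ioo 0 T ×ˢ closure Ω,
          DifferentiableAt ℝ (fun z => q (p.1, z)) p.2) →
        (∀ p ∈ Set.Ioo 0 T ×ˢ closure Ω,
          DifferentiableAt ℝ (fun y => fderiv ℝ (fun z => q (p.1, z)) y) p.2) →
        ContinuousOn (fun p : ℝ × EuclideanSpace ℝ (Fin N) =>
          fderiv ℝ (fun z => q (p.1, z)) p.2) (Set.Ioo 0 T ×ˢ closure Ω) →
        ContinuousOn (fun p : ℝ × EuclideanSpace ℝ (Fin N) =>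
          fderiv ℝ (fun y => fderiv ℝ (fun z => q (p.1, z)) y) p.2)
          (Set.Ioo 0 T ×ˢ closure Ω) →
        (∀ t ∈ Set.Ioo (0:ℝ) T, ∀ x ∈ Ω,
          -qt (t, x) - spaceLaplacian (fun z => q (t, z)) x
            + a (t, x) * q (t, x) = 0) →
        (∀ t ∈ Set.Ioo (0:ℝ) T, ∀ x ∈ frontier Ω,
          ⟪gradient (fun z => q (t, z)) x, gradient η x⟫ = 0) →
        (∫ t in Set.Ioo (T/4) (3*T/4), ∫ x in Ω, q (t, x))
          ≤ Real.exp (C * (1 + 1/T + Real.sqrt (eLpNorm a ⊤ (volume.restrict (Set.Ioo (0:ℝ) T ×ˢ Ω))).toReal)) *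
            ∫ t in Set.Ioo (0:ℝ) T, ∫ x in ω, q (t, x) := by
  obtain ⟨C, hC, hobs⟩ := observability_L1_L1_general hΩo hΩb hωo.measurableSet hωΩ hη hηpos hηbd
    fun x hx => hηgrad x (closure_mono (sdiff_subset_sdiff_right (subset_closure.trans hω₀ω)) hx)
  refine ⟨C, hC, fun T hT a ha ⟨B, haB⟩ q qt hqc hq₀ hqt hqtc hqd hqdd _ hqddc heq _ =>
    hobs T _ hT ENNReal.toReal_nonneg q qt hqc ?_⟩
  have hsub : Ioo 0 T ×ˢ closure Ω ⊆ Icc 0 T ×ˢ closure Ω :=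
    prod_mono Ioo_subset_Icc_self subset_rfl
  exact ⟨hqc.mono hsub, fun p hp => hq₀ p (hsub hp), hqt, hqtc, hqd, hqdd, hqddc,
    ae_le_mul_of_backward_heat_eq measurableSet_Ioo hΩo.measurableSet ha haB
      (fun p hp => hq₀ p (hsub ⟨hp.1, subset_closure hp.2⟩)) heq⟩
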